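/- arXiv:math/0605539 — 2 statements merged into one kernel-verified Lean document; each statement's English description precedes it below -/
import Mathlib

section
/- There is a ring isomorphism ℤ[x₁,…,xₙ,u₁,…,uₙ]/⟨e₁(x)−e₁(u), …, eₙ(x)−eₙ(u)⟩ ≅ 𝒢, where e_k denotes the k-th elementary symmetric polynomial (so the relations say (1+x₁)⋯(1+xₙ) = (1+u₁)⋯(1+uₙ)), sending the class of x_ν to the tuple (u_{w(ν)})_{w∈S_n} and the class of u_ν to the constant tuple whose every entry is u_ν. -/
open MvPolynomial

/-- The GKM set: tuples `(f_w)_{w ∈ S_n}` of polynomials in `ℤ[u₁,…,uₙ]` such that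
`u_p - u_q` divides `f_w - f_{s_{pq} w}` for all `w` and all `p < q`. -/
def gkmSet (n : ℕ) : Set (Equiv.Perm (Fin n) → MvPolynomial (Fin n) ℤ) :=
  {f | ∀ w : Equiv.Perm (Fin n), ∀ p q : Fin n, p < q →
    (X p - X q : MvPolynomial (Fin n) ℤ) ∣ (f w - f (Equiv.swap p q * w))}

/-- The ring homomorphism `ℤ[x₁,…,xₙ,u₁,…,uₙ] → ∏_{w ∈ S_n} ℤ[u₁,…,uₙ]` sending
`x_ν` to the tuple `(u_{w(ν)})_w` and `u_ν` to the constant tuple `u_ν`. -/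
noncomputable def borelHom (n : ℕ) :
    MvPolynomial (Fin n ⊕ Fin n) ℤ →+* (Equiv.Perm (Fin n) → MvPolynomial (Fin n) ℤ) :=
  eval₂Hom (Int.castRingHom _)
    (Sum.elim (fun ν => fun w => X (w ν)) (fun ν => fun _ => X ν))

/-- The ideal generated by `e_k(x) - e_k(u)` for `k = 1, …, n`; the relations say
`(1+x₁)⋯(1+xₙ) = (1+u₁)⋯(1+uₙ)`. -/
noncomputable def symmRelations (n : ℕ) : Ideal (MvPolynomial (Fin n ⊕ Fin n) ℤ) :=
  Ideal.span {r | ∃ k ∈ Finset.Icc 1 n,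
    r = rename Sum.inl (esymm (Fin n) ℤ k) - rename Sum.inr (esymm (Fin n) ℤ k)}

/-!
Order the permutations lexicographically. The product of the `x_i - u_{w(j)}` over the inversions
`i < j` of `w` vanishes at every permutation before `w`, and its value at `w` is the product of the
differences `u_{w(i)} - u_{w(j)}`. If a GKM tuple vanishes at every permutation before `w`, then
each of these pairwise coprime differences divides its entry at `w`, hence so does their product.
So the images of the `n!` inversion products form a basis of `𝒢`, and the Borel homomorphism is
onto `𝒢`.

For the kernel, the relations say that the classes of the `x_i` are the roots of `∏ (T - u_i)`.
Adjoining these roots one at a time shows that the quotient is spanned over `ℤ[u]` by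
`n · (n - 1) ⋯ 1 = n!` elements. As it maps onto a free module of rank `n!`, the map is injective by
the Orzech property of commutative rings.
-/

section Triangular

variable {R ι : Type*} [CommRing R] [Finite ι] [LinearOrder ι] {D : ι → ι → R}

theorem linearIndependent_of_triangular (hzero : ∀ ⦃v w⦄, v < w → D w v = 0)
    (hreg : ∀ w, IsRegular (D w w)) : LinearIndependent R D := by
  have := Fintype.ofFinite ι
  refine Fintype.linearIndependent_iff.2 fun c hc w => ?_
  induction w using WellFoundedLT.induction with
  | ind w ih =>
    have hw : ∑ v, c v * D v w = 0 := by simpa using congrFun hc w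
    rw [Finset.sum_eq_single w] at hw
    · exact (hreg w).right.mul_right_eq_zero_iff.1 hw
    · intro v _ hvw
      obtain hlt | hgt := hvw.lt_or_gt
      · rw [ih v hlt, zero_mul]
      · rw [hzero hgt, mul_zero]
    · simp

theorem le_span_range_of_triangular {N : Submodule R (ι → R)} (hmem : ∀ w, D w ∈ N)
    (hzero : ∀ ⦃v w⦄, v < w → D w v = 0)
    (hdvd : ∀ w, ∀ f ∈ N, (∀ v < w, f v = 0) → D w w ∣ f w) :
    N ≤ Submodule.span R (Set.range D) := by
  have := Fintype.ofFinite ι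
  suffices h : ∀ s : Finset ι, IsUpperSet (s : Set ι) → ∀ f ∈ N, (∀ v ∉ s, f v = 0) →
      f ∈ Submodule.span R (Set.range D) from
    fun f hf => h Finset.univ (by simpa using isUpperSet_univ) f hf (by simp)
  intro s
  induction s using Finset.induction_on_min with
  | empty =>
    intro _ f _ hf
    rw [funext fun v => hf v (Finset.notMem_empty v)]
    exact zero_mem _
  | insert w s hws ih =>
    intro hs f hfN hf
    have hlt : ∀ v ∉ insert w s, v < w := fun v hv =>
      not_le.1 fun hwv => hv (hs hwv (Finset.mem_insert_self w s))
    have hs' : IsUpperSet (s : Set ι) := fun a b hab ha =>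
      (Finset.mem_insert.1 (hs hab (Finset.mem_insert_of_mem ha))).resolve_left
        ((hws a ha).trans_le hab).ne'
    obtain ⟨c, hc⟩ := hdvd w f hfN fun v hvw => hf v fun hv =>
      (Finset.mem_insert.1 hv).elim hvw.ne fun hvs => (hws v hvs).not_gt hvw
    have hsub : f - c • D w ∈ Submodule.span R (Set.range D) := by
      refine ih hs' _ (N.sub_mem hfN (N.smul_mem c (hmem w))) fun v hv => ?_
      obtain rfl | hvw := eq_or_ne v w
      · simp [hc, mul_comm]
      · have hvs : v ∉ insert w s := by simp [hvw, hv]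
        simp [hf v hvs, hzero (hlt v hvs)]
    rw [← sub_add_cancel f (c • D w)]
    exact add_mem hsub (Submodule.smul_mem _ c (Submodule.subset_span ⟨w, rfl⟩))

end Triangular

theorem injective_of_linearIndependent_comp {R M N ι : Type*} [CommRing R] [AddCommGroup M]
    [Module R M] [AddCommGroup N] [Module R N] [Fintype ι] {φ : M →ₗ[R] N} {D : ι → M}
    (hD : LinearIndependent R (φ ∘ D)) {s : Finset M} (hs : s.card ≤ Fintype.card ι)
    (hspan : Submodule.span R (s : Set M) = ⊤) : Function.Injective φ := by
  obtain ⟨e⟩ : Nonempty (s ↪ ι) := Function.Embedding.nonempty_of_card_le (by simpa using hs)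
  let f : (s →₀ R) →ₗ[R] M := Finsupp.linearCombination R Subtype.val
  let i : (s →₀ R) →ₗ[R] M := Finsupp.linearCombination R (D ∘ e)
  have hf : Function.Surjective f := by
    rw [← LinearMap.range_eq_top, Finsupp.range_linearCombination, Subtype.range_coe, ← hspan]
  have hi : Function.Injective (φ.rangeRestrict ∘ₗ i) := by
    have h : Function.Injective (φ ∘ₗ i) := by
      simpa only [i, LinearIndependent, Function.comp_assoc,
        Finsupp.linearCombination_linear_comp] using hD.comp e e.injective
    exact .of_comp (f := φ.range.subtype) h
  have hsurj : Function.Surjective (φ.rangeRestrict ∘ₗ f) :=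
    φ.surjective_rangeRestrict.comp hf
  have : Module.Finite R φ.range := .of_surjective _ hsurj
  have hinj := OrzechProperty.injective_of_surjective_of_injective _ _ hi hsurj
  exact φ.injective_rangeRestrict_iff.1 (.of_comp_right hinj hf)

section AdjoinRoots

open scoped Nat Polynomial

theorem exists_monic_map_of_eq_X_sub_C_root_mul {R : Type*} [CommRing R] {q : R[X]}
    (hq : q.Monic) :
    ∃ p : (AdjoinRoot q)[X], p.Monic ∧
      q.map (AdjoinRoot.of q) = (Polynomial.X - Polynomial.C (AdjoinRoot.root q)) * p := by
  have hfactor := Polynomial.mul_divByMonic_eq_iff_isRoot.2 (AdjoinRoot.isRoot_root q)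
  exact ⟨_, (Polynomial.monic_X_sub_C _).of_mul_monic_left (hfactor ▸ hq.map _), hfactor.symm⟩

theorem exists_monic_map_eq_of_map_eq_X_sub_C_mul {R A : Type*} [CommRing R] [CommRing A]
    [Algebra R A] {q : R[X]} [Algebra (AdjoinRoot q) A] [IsScalarTower R (AdjoinRoot q) A]
    (hq : q.Monic) {g : A[X]}
    (hmap : q.map (algebraMap R A) =
      (Polynomial.X - Polynomial.C (algebraMap (AdjoinRoot q) A (AdjoinRoot.root q))) * g) :
    ∃ p : (AdjoinRoot q)[X], p.Monic ∧ p.map (algebraMap (AdjoinRoot q) A) = g := by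
  obtain ⟨p, hp, hqp⟩ := exists_monic_map_of_eq_X_sub_C_root_mul hq
  refine ⟨p, hp, (Polynomial.monic_X_sub_C _).isRegular.left (Eq.trans ?_ hmap)⟩
  rw [IsScalarTower.algebraMap_eq R (AdjoinRoot q) A, ← Polynomial.map_map,
    AdjoinRoot.algebraMap_eq, hqp]
  simp

theorem adjoin_adjoinRoot_eq_top {R A : Type*} [CommRing R] [CommRing A] [Algebra R A] {q : R[X]}
    [Algebra (AdjoinRoot q) A] [IsScalarTower R (AdjoinRoot q) A] {t : Set A}
    (ht : Algebra.adjoin R (insert (algebraMap (AdjoinRoot q) A (AdjoinRoot.root q)) t) = ⊤) :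
    Algebra.adjoin (AdjoinRoot q) t = ⊤ := by
  apply Subalgebra.restrictScalars_injective R
  rw [Algebra.adjoin_eq_adjoin_union R _ _ AdjoinRoot.adjoinRoot_eq_top, Set.image_singleton,
    Set.singleton_union, ht, Subalgebra.restrictScalars_top]

theorem exists_finset_span_eq_top_of_tower {R B A : Type*} [CommSemiring R] [Semiring B]
    [Algebra R B] [AddCommMonoid A] [Module R A] [Module B A] [IsScalarTower R B A]
    {s : Finset B} {t : Finset A} (hs : Submodule.span R (s : Set B) = ⊤)
    (ht : Submodule.span B (t : Set A) = ⊤) :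
    ∃ u : Finset A, u.card ≤ s.card * t.card ∧ Submodule.span R (u : Set A) = ⊤ := by
  classical
  refine ⟨Finset.image₂ (· • ·) s t, Finset.card_image₂_le _ s t, ?_⟩
  rw [Finset.coe_image₂, Set.image2_smul, Submodule.span_smul_of_span_eq_top hs, ht,
    Submodule.restrictScalars_top]

theorem exists_finset_span_adjoinRoot_eq_top {R : Type*} [CommRing R] {q : R[X]}
    (hq : q.Monic) : ∃ s : Finset (AdjoinRoot q), s.card ≤ q.natDegree ∧
      Submodule.span R (s : Set (AdjoinRoot q)) = ⊤ := by
  classical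
  refine ⟨Finset.univ.image (AdjoinRoot.powerBasisAux' hq), ?_, ?_⟩
  · exact Finset.card_image_le.trans_eq (Finset.card_fin _)
  · simp [(AdjoinRoot.powerBasisAux' hq).span_eq]

theorem exists_finset_span_eq_top_of_adjoin_roots {R A : Type*} [CommRing R] [CommRing A]
    [Algebra R A] {q : R[X]} (hq : q.Monic) {s : Multiset A}
    (hmap : q.map (algebraMap R A) = (s.map fun a => Polynomial.X - Polynomial.C a).prod)
    (hadjoin : Algebra.adjoin R {a | a ∈ s} = ⊤) :
    ∃ t : Finset A, t.card ≤ s.card ! ∧ Submodule.span R (t : Set A) = ⊤ := by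
  induction s using Multiset.induction generalizing R with
  | empty =>
    refine ⟨{1}, by simp, ?_⟩
    simp only [Multiset.notMem_zero, Set.ofPred_false, Algebra.adjoin_empty] at hadjoin
    rw [Finset.coe_singleton, ← Submodule.one_eq_span, ← Algebra.toSubmodule_bot, hadjoin,
      Algebra.top_toSubmodule]
  | cons a s ih =>
    obtain _ | _ := subsingleton_or_nontrivial A
    · exact ⟨∅, by simp, Subsingleton.elim _ _⟩
    have hdeg : q.natDegree = s.card + 1 := by
      rw [← hq.natDegree_map (algebraMap R A), hmap,
        Polynomial.natDegree_multiset_prod_X_sub_C_eq_card, Multiset.card_cons]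
    rw [Multiset.map_cons, Multiset.prod_cons] at hmap
    have hroot : q.aeval a = 0 := by
      simp [← Polynomial.eval_map_algebraMap, hmap]
    let lift := AdjoinRoot.liftAlgHom q (Algebra.ofId R A) a hroot
    let : Algebra (AdjoinRoot q) A := lift.toAlgebra
    have : IsScalarTower R (AdjoinRoot q) A := .of_algebraMap_eq fun r => (lift.commutes r).symm
    have hroot_map : algebraMap (AdjoinRoot q) A (AdjoinRoot.root q) = a :=
      AdjoinRoot.liftAlgHom_root ..
    obtain ⟨p, hp, hmap_p⟩ :=
      exists_monic_map_eq_of_map_eq_X_sub_C_mul hq (hroot_map.symm ▸ hmap)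
    have hinsert : Algebra.adjoin R (insert a {b | b ∈ s}) = ⊤ := by
      simpa [Set.insert_def] using hadjoin
    have hadjoin_p : Algebra.adjoin (AdjoinRoot q) {b | b ∈ s} = ⊤ :=
      adjoin_adjoinRoot_eq_top (hroot_map.symm ▸ hinsert)
    obtain ⟨t, htcard, ht⟩ := ih hp hmap_p hadjoin_p
    obtain ⟨r, hrcard, hr⟩ := exists_finset_span_adjoinRoot_eq_top hq
    obtain ⟨m, hmcard, hm⟩ := exists_finset_span_eq_top_of_tower hr ht
    refine ⟨m, hmcard.trans ?_, hm⟩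
    rw [Multiset.card_cons, Nat.factorial_succ, ← hdeg]
    exact Nat.mul_le_mul hrcard htcard

end AdjoinRoots

theorem prod_dvd_of_forall_dvd_of_dvd_mul {ι M : Type*} [CommMonoid M] {s : Finset ι}
    {d : ι → M} {f : M}
    (hcancel : ∀ i ∈ s, ∀ j ∈ s, i ≠ j → ∀ c, d i ∣ d j * c → d i ∣ c)
    (hdvd : ∀ i ∈ s, d i ∣ f) : ∏ i ∈ s, d i ∣ f := by
  classical
  induction s using Finset.induction generalizing f with
  | empty => simp
  | insert a s ha ih =>
    obtain ⟨c, rfl⟩ := hdvd a (Finset.mem_insert_self a s)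
    rw [Finset.prod_insert ha]
    refine mul_dvd_mul_left _ (ih (fun i hi j hj => hcancel i (Finset.mem_insert_of_mem hi) j
      (Finset.mem_insert_of_mem hj)) fun i hi => ?_)
    exact hcancel i (Finset.mem_insert_of_mem hi) a (Finset.mem_insert_self a s)
      (ne_of_mem_of_not_mem hi ha) c (hdvd i (Finset.mem_insert_of_mem hi))

theorem multiset_prod_X_sub_C_eq_of_esymm_eq {R : Type*} [CommRing R] {s t : Multiset R}
    (hcard : s.card = t.card) (hesymm : ∀ k ∈ Finset.Icc 1 s.card, s.esymm k = t.esymm k) :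
    (s.map fun a => Polynomial.X - Polynomial.C a).prod =
      (t.map fun a => Polynomial.X - Polynomial.C a).prod := by
  rw [Multiset.prod_X_sub_X_eq_sum_esymm, Multiset.prod_X_sub_X_eq_sum_esymm, ← hcard]
  refine Finset.sum_congr rfl fun k hk => ?_
  obtain rfl | hpos := k.eq_zero_or_pos
  · simp [Multiset.esymm]
  · rw [hesymm k (Finset.mem_Icc.2 ⟨hpos, Finset.mem_range_succ_iff.1 hk⟩)]

section GenericFamily

variable {R σ : Type*} [CommRing R]

/-- A family in a commutative ring whose pairwise differences are regular and pairwise coprime, the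
latter in the sense that one difference can be cancelled from a multiple of another one. This is all
that the argument needs to know about the variables `u₁,…,uₙ`. -/
structure IsGenericFamily (u : σ → R) : Prop where
  isRegular_sub ⦃p q : σ⦄ (hpq : p ≠ q) : IsRegular (u p - u q)
  dvd_of_dvd_sub_mul ⦃p q a b : σ⦄ (hab : a ≠ b) (hne : s(a, b) ≠ s(p, q)) (c : R) :
    u p - u q ∣ (u a - u b) * c → u p - u q ∣ c

theorem isRegular_X_sub_X {a b : σ} (hab : a ≠ b) :
    IsRegular (X a - X b : MvPolynomial σ R) := by
  classical
  rw [← isLeftRegular_iff_isRegular, isLeftRegular_iff_right_eq_zero_of_mul]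
  intro c hc
  -- The automorphism `X a ↦ X a + X b` turns `X a - X b` into the variable `X a`.
  let shear : MvPolynomial σ R →ₐ[R] MvPolynomial σ R :=
    aeval (Function.update X a (X a + X b))
  let unshear : MvPolynomial σ R →ₐ[R] MvPolynomial σ R :=
    aeval (Function.update X a (X a - X b))
  have hinv : unshear.comp shear = AlgHom.id R _ := by
    ext1 i
    obtain rfl | hi := eq_or_ne i a <;> simp [shear, unshear, *, hab.symm]
  have hshear : X a * shear c = 0 := by
    simpa [shear, hab.symm] using congrArg shear hc
  rw [← AlgHom.id_apply (R := R) c, ← hinv, AlgHom.comp_apply,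
    isRegular_X.left.mul_left_eq_zero_iff.1 hshear, map_zero]

theorem X_sub_X_dvd_iff_rename_update_eq_zero [DecidableEq σ] {p q : σ} {f : MvPolynomial σ R} :
    X p - X q ∣ f ↔ rename (Function.update id p q) f = 0 := by
  refine ⟨fun h => ?_, fun h => ?_⟩
  · have := map_dvd (rename (R := R) (Function.update id p q)) h
    obtain rfl | hne := eq_or_ne q p
    · simpa using this
    · simpa [hne] using this
  · let π := Ideal.Quotient.mkₐ R (Ideal.span {(X p - X q : MvPolynomial σ R)})
    have hπ : π.comp (rename (Function.update id p q)) = π := by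
      ext i
      obtain rfl | hi := eq_or_ne i p
      · simpa [π] using
          (Ideal.Quotient.eq.2 (Ideal.mem_span_singleton_self (X i - X q : MvPolynomial σ R))).symm
      · simp [hi]
    rw [← Ideal.mem_span_singleton, ← Ideal.Quotient.eq_zero_iff_mem]
    simpa [h, π] using (DFunLike.congr_fun hπ f).symm

theorem isGenericFamily_X : IsGenericFamily (X : σ → MvPolynomial σ R) where
  isRegular_sub _ _ := isRegular_X_sub_X
  dvd_of_dvd_sub_mul p q a b hab hne c h := by
    classical
    rw [X_sub_X_dvd_iff_rename_update_eq_zero] at h ⊢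
    have himage : Function.update id p q a ≠ Function.update id p q b := by
      simp only [Function.update_apply, id]
      grind
    rw [map_mul, map_sub, rename_X, rename_X] at h
    exact (isRegular_X_sub_X himage).left.mul_left_eq_zero_iff.1 h

end GenericFamily

section PermEval

variable {R σ : Type*} [CommRing R] (u : σ → R)

/-- Evaluation of a polynomial in the variables `x` at all permutations of the family `u`: the Borel
homomorphism. The parameters `u` are scalars here, so that both sides are algebras over `R`. -/
noncomputable def permEval : MvPolynomial σ R →ₐ[R] (Equiv.Perm σ → R) :=
  aeval fun i w => u (w i)

theorem permEval_apply (P : MvPolynomial σ R) (w : Equiv.Perm σ) :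
    permEval u P w = aeval (u ∘ w) P :=
  DFunLike.congr_fun (algHom_ext (f := (Pi.evalAlgHom R _ w).comp (permEval u))
    (by simp [permEval])) P

/-- The ideal of the Borel presentation, generated by the `e_k(x) - e_k(u)` with `1 ≤ k ≤ |σ|`. -/
noncomputable def esymmRelations [Fintype σ] : Ideal (MvPolynomial σ R) :=
  Ideal.span {r | ∃ k ∈ Finset.Icc 1 (Fintype.card σ),
    r = esymm σ R k - C (aeval u (esymm σ R k))}

theorem esymmRelations_le_ker_permEval [Fintype σ] :
    esymmRelations u ≤ RingHom.ker (permEval u) := by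
  refine Ideal.span_le.2 ?_
  rintro _ ⟨k, -, rfl⟩
  refine funext fun w => ?_
  rw [permEval_apply, map_sub, ← aeval_rename, rename_esymm, aeval_C, Algebra.algebraMap_self_apply,
    sub_self, Pi.zero_apply]

theorem exists_finset_span_quotient_esymmRelations_eq_top [Fintype σ] :
    ∃ t : Finset (MvPolynomial σ R ⧸ esymmRelations u), t.card ≤ (Fintype.card σ).factorial ∧
      Submodule.span R (t : Set (MvPolynomial σ R ⧸ esymmRelations u)) = ⊤ := by
  let π := Ideal.Quotient.mkₐ R (esymmRelations u)
  let roots : Multiset (MvPolynomial σ R ⧸ esymmRelations u) := Finset.univ.val.map (π ∘ X)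
  have hcard : roots.card = Fintype.card σ := by simp [roots]
  have hesymm : ∀ k ∈ Finset.Icc 1 roots.card,
      roots.esymm k = (Finset.univ.val.map (algebraMap R _ ∘ u)).esymm k := by
    intro k hk
    rw [← aeval_esymm_eq_multiset_esymm σ R, ← aeval_esymm_eq_multiset_esymm σ R, ← aeval_unique,
      aeval_algebraMap_apply]
    exact Ideal.Quotient.eq.2 (Ideal.subset_span ⟨k, hcard ▸ hk, rfl⟩)
  have hmap : (∏ i, (Polynomial.X - Polynomial.C (u i))).map (algebraMap R _) =
      (roots.map fun a => Polynomial.X - Polynomial.C a).prod := by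
    rw [multiset_prod_X_sub_C_eq_of_esymm_eq (by simp [roots]) hesymm]
    simp [Polynomial.map_prod]
  have hadjoin : Algebra.adjoin R {a | a ∈ roots} = ⊤ := by
    have hroots : {a | a ∈ roots} = π '' Set.range X := by
      ext; simp [roots]
    rw [hroots, ← AlgHom.map_adjoin, adjoin_range_X, Algebra.map_top, AlgHom.range_eq_top]
    exact Ideal.Quotient.mkₐ_surjective R _
  rw [← hcard]
  exact exists_finset_span_eq_top_of_adjoin_roots
    (Polynomial.monic_prod_X_sub_C u Finset.univ) hmap hadjoin

variable [DecidableEq σ]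

/-- The GKM algebra of a family `u`. The divisibility is required for all pairs `p`, `q` rather than
only for `p < q`, so that no order on the index type is involved. -/
def gkmSubalgebra : Subalgebra R (Equiv.Perm σ → R) where
  carrier := {f | ∀ w p q, u p - u q ∣ f w - f (Equiv.swap p q * w)}
  mul_mem' hf hg w p q := dvd_mul_sub_mul (hf w p q) (hg w p q)
  add_mem' hf hg w p q := by
    simpa only [Pi.add_apply, add_sub_add_comm] using dvd_add (hf w p q) (hg w p q)
  algebraMap_mem' c w p q := by simp

theorem range_permEval_le : (permEval u).range ≤ gkmSubalgebra u := by
  rw [permEval, ← Algebra.adjoin_range_eq_range_aeval, Algebra.adjoin_le_iff]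
  rintro _ ⟨i, rfl⟩ w p q
  dsimp only
  rw [Equiv.Perm.mul_apply]
  obtain hp | hp := eq_or_ne (w i) p
  · rw [hp, Equiv.swap_apply_left]
  obtain hq | hq := eq_or_ne (w i) q
  · rw [hq, Equiv.swap_apply_right, ← dvd_neg, neg_sub]
  · rw [Equiv.swap_apply_of_ne_of_ne hp hq, sub_self]
    exact dvd_zero _

end PermEval

section Lex

variable {R σ : Type*} [CommRing R] [LinearOrder σ] [Fintype σ]

/-- The lexicographic order on permutations, comparing the words `(w(1),…,w(n))`. It takes the place
of the Bruhat order and has the advantage of being linear. -/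
noncomputable abbrev permLexOrder : LinearOrder (Equiv.Perm σ) :=
  LinearOrder.lift' (fun w => toLex ⇑w) (toLex.injective.comp DFunLike.coe_injective)

attribute [local instance] permLexOrder

theorem perm_lt_iff {v w : Equiv.Perm σ} : v < w ↔ ∃ i, (∀ j < i, v j = w j) ∧ v i < w i :=
  Iff.rfl

/-- The inversions of a permutation, as pairs of positions. -/
def inversions (w : Equiv.Perm σ) : Finset (σ × σ) :=
  {x | x.1 < x.2 ∧ w x.2 < w x.1}

theorem mem_inversions {w : Equiv.Perm σ} {x : σ × σ} :
    x ∈ inversions w ↔ x.1 < x.2 ∧ w x.2 < w x.1 := by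
  simp [inversions]

theorem exists_mem_inversions_of_lt {v w : Equiv.Perm σ} (h : v < w) :
    ∃ x ∈ inversions w, v x.1 = w x.2 := by
  obtain ⟨i, heq, hlt⟩ := perm_lt_iff.1 h
  obtain ⟨j, hj⟩ := w.surjective (v i)
  refine ⟨(i, j), mem_inversions.2 ⟨?_, hj ▸ hlt⟩, hj.symm⟩
  rcases lt_trichotomy i j with hij | rfl | hji
  · exact hij
  · exact absurd hj hlt.ne'
  · exact absurd (v.injective ((heq j hji).trans hj)) hji.ne

theorem swap_mul_lt_of_mem_inversions {w : Equiv.Perm σ} {x : σ × σ} (hx : x ∈ inversions w) :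
    Equiv.swap (w x.1) (w x.2) * w < w := by
  rw [mem_inversions] at hx
  refine perm_lt_iff.2 ⟨x.1, fun k hk => ?_, by simpa using hx.2⟩
  rw [Equiv.Perm.mul_apply, Equiv.swap_apply_of_ne_of_ne (w.injective.ne hk.ne)
    (w.injective.ne (hk.trans hx.1).ne)]

theorem sym2_map_ne_of_mem_inversions {w : Equiv.Perm σ} {x y : σ × σ} (hx : x ∈ inversions w)
    (hy : y ∈ inversions w) (hxy : x ≠ y) : s(w x.1, w x.2) ≠ s(w y.1, w y.2) := by
  rw [mem_inversions] at hx hy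
  rw [Ne, Sym2.eq_iff]
  rintro (⟨h₁, h₂⟩ | ⟨h₁, h₂⟩)
  · exact hxy (Prod.ext (w.injective h₁) (w.injective h₂))
  · exact (hx.2.trans (h₁ ▸ h₂ ▸ hy.2)).false

/-- The product of the `x_i - u_{w(j)}` over the inversions `i < j` of `w`. Its images under
`permEval u` form a triangular basis of the GKM algebra. -/
noncomputable def inversionProd (u : σ → R) (w : Equiv.Perm σ) : MvPolynomial σ R :=
  ∏ x ∈ inversions w, (X x.1 - C (u (w x.2)))

variable {u : σ → R}

theorem permEval_inversionProd (v w : Equiv.Perm σ) :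
    permEval u (inversionProd u w) v = ∏ x ∈ inversions w, (u (v x.1) - u (w x.2)) := by
  simp [permEval_apply, inversionProd]

theorem permEval_inversionProd_eq_zero_of_lt ⦃v w : Equiv.Perm σ⦄ (h : v < w) :
    permEval u (inversionProd u w) v = 0 := by
  obtain ⟨x, hx, hvw⟩ := exists_mem_inversions_of_lt h
  rw [permEval_inversionProd]
  exact Finset.prod_eq_zero hx (by rw [hvw, sub_self])

theorem IsGenericFamily.isRegular_permEval_inversionProd (hu : IsGenericFamily u)
    (w : Equiv.Perm σ) : IsRegular (permEval u (inversionProd u w) w) := by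
  rw [permEval_inversionProd]
  exact IsRegular.prod fun x hx => hu.isRegular_sub (mem_inversions.1 hx).2.ne'

theorem IsGenericFamily.permEval_inversionProd_dvd (hu : IsGenericFamily u) {w : Equiv.Perm σ}
    {f : Equiv.Perm σ → R} (hf : f ∈ gkmSubalgebra u) (hzero : ∀ v < w, f v = 0) :
    permEval u (inversionProd u w) w ∣ f w := by
  rw [permEval_inversionProd]
  refine prod_dvd_of_forall_dvd_of_dvd_mul (fun x hx y hy hxy => ?_) fun x hx => ?_
  · exact hu.dvd_of_dvd_sub_mul (mem_inversions.1 hy).2.ne'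
      (sym2_map_ne_of_mem_inversions hy hx hxy.symm)
  · simpa [hzero _ (swap_mul_lt_of_mem_inversions hx)] using hf w (w x.1) (w x.2)

theorem IsGenericFamily.gkmSubalgebra_le_span (hu : IsGenericFamily u) :
    (gkmSubalgebra u).toSubmodule ≤
      Submodule.span R (Set.range fun w => permEval u (inversionProd u w)) :=
  le_span_range_of_triangular (fun _ => range_permEval_le u ⟨_, rfl⟩)
    permEval_inversionProd_eq_zero_of_lt fun _ _ hf => hu.permEval_inversionProd_dvd hf

theorem IsGenericFamily.linearIndependent_permEval_inversionProd (hu : IsGenericFamily u) :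
    LinearIndependent R fun w => permEval u (inversionProd u w) :=
  linearIndependent_of_triangular permEval_inversionProd_eq_zero_of_lt
    hu.isRegular_permEval_inversionProd

end Lex

section Presentation

variable {R σ : Type*} [CommRing R] {u : σ → R}

theorem IsGenericFamily.range_permEval [Finite σ] [DecidableEq σ] (hu : IsGenericFamily u) :
    (permEval u).range = gkmSubalgebra u := by
  refine (range_permEval_le u).antisymm fun f hf => ?_
  have := Fintype.ofFinite σ
  let order : LinearOrder σ := .lift' (Fintype.equivFin σ) (Equiv.injective _)
  obtain rfl : ‹DecidableEq σ› = order.toDecidableEq := Subsingleton.elim _ _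
  refine Submodule.span_le (p := (permEval u).range.toSubmodule).2 ?_ (hu.gkmSubalgebra_le_span hf)
  rintro _ ⟨w, rfl⟩
  exact ⟨_, rfl⟩

theorem IsGenericFamily.ker_permEval [Fintype σ] (hu : IsGenericFamily u) :
    RingHom.ker (permEval u) = esymmRelations u := by
  classical
  refine le_antisymm (fun P hP => ?_) (esymmRelations_le_ker_permEval u)
  let order : LinearOrder σ := .lift' (Fintype.equivFin σ) (Equiv.injective _)
  let φ := Ideal.Quotient.liftₐ (esymmRelations u) (permEval u) (esymmRelations_le_ker_permEval u)
  have hindep : LinearIndependent R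
      (φ.toLinearMap ∘ fun w => Ideal.Quotient.mk (esymmRelations u) (inversionProd u w)) :=
    hu.linearIndependent_permEval_inversionProd
  obtain ⟨t, htcard, ht⟩ := exists_finset_span_quotient_esymmRelations_eq_top u
  have hφ : Function.Injective φ :=
    injective_of_linearIndependent_comp hindep (htcard.trans_eq Fintype.card_perm.symm) ht
  exact Ideal.Quotient.eq_zero_iff_mem.1 (hφ (hP.trans (map_zero φ).symm))

theorem borel_presentation_of_gkm_general [Fintype σ] [DecidableEq σ] (hu : IsGenericFamily u) :
    (∀ ν, permEval u (X ν) = fun w => u (w ν)) ∧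
    (∀ c, permEval u (C c) = fun _ => c) ∧
    RingHom.ker (permEval u) = esymmRelations u ∧
    (permEval u).range = gkmSubalgebra u :=
  ⟨fun ν => aeval_X _ ν, fun c => aeval_C _ c, hu.ker_permEval, hu.range_permEval⟩

end Presentation

section IntegerPolynomials

variable (n : ℕ)

theorem borelHom_apply (P : MvPolynomial (Fin n ⊕ Fin n) ℤ) :
    borelHom n P = permEval X (sumAlgEquiv ℤ (Fin n) (Fin n) P) := by
  refine DFunLike.congr_fun (g := (permEval X).toRingHom.comp
    (sumAlgEquiv ℤ (Fin n) (Fin n)).toRingEquiv.toRingHom) (ringHom_ext' ?_ ?_) P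
  · exact Subsingleton.elim _ _
  · rintro (i | i) <;> simp [borelHom, permEval, funext_iff]

theorem sumAlgEquiv_esymm_sub_esymm (k : ℕ) :
    sumAlgEquiv ℤ (Fin n) (Fin n)
      (rename Sum.inl (esymm (Fin n) ℤ k) - rename Sum.inr (esymm (Fin n) ℤ k)) =
        esymm (Fin n) _ k - C (aeval X (esymm (Fin n) (MvPolynomial (Fin n) ℤ) k)) := by
  have hinl : sumAlgEquiv ℤ (Fin n) (Fin n) (rename Sum.inl (esymm (Fin n) ℤ k)) =
      esymm (Fin n) (MvPolynomial (Fin n) ℤ) k := by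
    simpa [map_esymm] using
      DFunLike.congr_fun (sumAlgEquiv_comp_rename_inl ℤ (Fin n) (Fin n)) (esymm (Fin n) ℤ k)
  have hinr : sumAlgEquiv ℤ (Fin n) (Fin n) (rename Sum.inr (esymm (Fin n) ℤ k)) =
      C (esymm (Fin n) ℤ k) :=
    DFunLike.congr_fun (sumAlgEquiv_comp_rename_inr ℤ (Fin n) (Fin n)) (esymm (Fin n) ℤ k)
  have haeval : aeval X (esymm (Fin n) (MvPolynomial (Fin n) ℤ) k) = esymm (Fin n) ℤ k := by
    rw [aeval_esymm_eq_multiset_esymm, ← aeval_esymm_eq_multiset_esymm (Fin n) ℤ, aeval_X_left,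
      AlgHom.id_apply]
  rw [map_sub, hinl, hinr, haeval]

theorem map_sumAlgEquiv_symmRelations :
    (symmRelations n).map (sumAlgEquiv ℤ (Fin n) (Fin n)) = esymmRelations X := by
  rw [symmRelations, esymmRelations, Ideal.map_span, Fintype.card_fin]
  congr 1
  ext r
  constructor
  · rintro ⟨_, ⟨k, hk, rfl⟩, rfl⟩
    exact ⟨k, hk, sumAlgEquiv_esymm_sub_esymm n k⟩
  · rintro ⟨k, hk, rfl⟩
    exact ⟨_, ⟨k, hk, rfl⟩, sumAlgEquiv_esymm_sub_esymm n k⟩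

theorem comap_sumAlgEquiv_esymmRelations :
    (esymmRelations X).comap (sumAlgEquiv ℤ (Fin n) (Fin n)) = symmRelations n := by
  rw [← map_sumAlgEquiv_symmRelations,
    Ideal.comap_map_of_bijective _ (sumAlgEquiv ℤ (Fin n) (Fin n)).bijective]

theorem ker_borelHom :
    RingHom.ker (borelHom n) =
      (RingHom.ker (permEval (X : Fin n → MvPolynomial (Fin n) ℤ))).comap
        (sumAlgEquiv ℤ (Fin n) (Fin n)) := by
  ext P
  rw [Ideal.mem_comap, RingHom.mem_ker, RingHom.mem_ker, borelHom_apply]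

theorem range_borelHom :
    Set.range (borelHom n) =
      Set.range (permEval (X : Fin n → MvPolynomial (Fin n) ℤ)) := by
  rw [funext (borelHom_apply n)]
  exact (sumAlgEquiv ℤ (Fin n) (Fin n)).surjective.range_comp (permEval X)

theorem gkmSet_eq_coe_gkmSubalgebra :
    gkmSet n = gkmSubalgebra (X : Fin n → MvPolynomial (Fin n) ℤ) := by
  ext f
  refine ⟨fun hf w p q => ?_, fun hf w p q _ => hf w p q⟩
  obtain hpq | rfl | hqp := lt_trichotomy p q
  · exact hf w p q hpq
  · simp [← Equiv.Perm.one_def]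
  · rw [← neg_sub, neg_dvd, Equiv.swap_comm]
    exact hf w q p hqp

end IntegerPolynomials

/-- Borel-type presentation of the `Sp(1)ⁿ`-equivariant cohomology of `Fl_n(ℍ)`:
the homomorphism `borelHom` sends `x_ν` to `(u_{w(ν)})_w` and `u_ν` to the constant
tuple `u_ν`, its kernel is the ideal of symmetric relations, and its range is the GKM
subring `𝒢`; hence it induces a ring isomorphism
`ℤ[x,u]/⟨(1+x₁)⋯(1+xₙ) = (1+u₁)⋯(1+uₙ)⟩ ≃ 𝒢`. -/
theorem borel_presentation_of_gkm (n : ℕ) (hn : 1 ≤ n) :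
    (∀ ν : Fin n, borelHom n (X (Sum.inl ν)) = fun w : Equiv.Perm (Fin n) => X (w ν)) ∧
    (∀ ν : Fin n, borelHom n (X (Sum.inr ν)) = fun _ : Equiv.Perm (Fin n) => X ν) ∧
    RingHom.ker (borelHom n) = symmRelations n ∧
    Set.range (borelHom n) = gkmSet n := by
  obtain ⟨hX, hC, hker, hrange⟩ :=
    borel_presentation_of_gkm_general (isGenericFamily_X (σ := Fin n) (R := ℤ))
  refine ⟨fun ν => ?_, fun ν => ?_, ?_, ?_⟩
  · rw [borelHom_apply, sumAlgEquiv_X_inl, hX]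
  · rw [borelHom_apply, sumAlgEquiv_X_inr, hC]
  · rw [ker_borelHom, hker, comap_sumAlgEquiv_esymmRelations]
  · rw [range_borelHom, ← AlgHom.coe_range, hrange, gkmSet_eq_coe_gkmSubalgebra]
end

section
/- Let L₁,…,Lₙ be pairwise orthogonal nonzero ℍ-lines in ℍⁿ (1-dimensional left ℍ-submodules with (h,k) = 0 whenever h ∈ L_μ, k ∈ L_ν, μ ≠ ν). Suppose each L_ν is invariant under the action h ↦ h·A* of every diagonal matrix A = Diag(z₁,…,zₙ) whose entries z_ν are unit quaternions lying in the subfield ℂ = {a+bi} ⊂ ℍ. Then there exists a permutation w ∈ S_n such that L_ν = ℍe_{w(ν)} for all ν. -/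
open scoped Quaternion

/-- The quaternionic Hermitian form `(h,k) = Σ_ν h_ν ⬝ star k_ν` on `ℍⁿ`. -/
noncomputable def qForm (n : ℕ) (h k : Fin n → Quaternion ℝ) : Quaternion ℝ :=
  ∑ i : Fin n, h i * star (k i)

/-!
If `v` spans a line stable under the diagonal matrix `z` with central entries, then `v` is an
eigenvector of `z`, so `z` is constant on the support of `v`. A family of such matrices that
separates the coordinates therefore forces the support of `v` to be a single point. For the torus
`U(1)ⁿ` its real elements, the sign changes, already separate the coordinates, and their entries
are central in `ℍ`, unlike those of a general element of `U(1)ⁿ`. Orthogonal lines are distinct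
because the Hermitian form is definite, so distinct indices receive distinct coordinates.
-/

section CoordinateLines

variable {ι K D : Type*} [CommSemiring K] [DivisionRing D] [Algebra K D] [FaithfulSMul K D]

lemma eq_of_smul_mem_span_singleton {v : ι → D} {z : ι → K}
    (hz : (fun i => z i • v i) ∈ Submodule.span D {v}) {i j : ι} (hi : v i ≠ 0) (hj : v j ≠ 0) :
    z i = z j := by
  obtain ⟨q, hq⟩ := Submodule.mem_span_singleton.mp hz
  have eigenvalue : ∀ k, v k ≠ 0 → q = algebraMap K D (z k) := fun k hk =>
    mul_right_cancel₀ hk ((congrFun hq k).trans (Algebra.smul_def _ _))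
  exact FaithfulSMul.algebraMap_injective K D ((eigenvalue i hi).symm.trans (eigenvalue j hj))

lemma span_singleton_pi_single [DecidableEq ι] (i : ι) {d : D} (hd : d ≠ 0) :
    Submodule.span D {(Pi.single i d : ι → D)} = Submodule.span D {Pi.single i 1} := by
  rw [← Submodule.span_singleton_smul_eq (IsUnit.mk0 d hd) (Pi.single i 1), ← Pi.single_smul,
    smul_eq_mul, mul_one]

lemma exists_span_singleton_eq_span_single [DecidableEq ι] {S : Set (ι → K)}
    (hS : S.SeparatesPoints) {v : ι → D} (hv : v ≠ 0)
    (hinv : ∀ z ∈ S, (fun i => z i • v i) ∈ Submodule.span D {v}) :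
    ∃ i, Submodule.span D {v} = Submodule.span D {Pi.single i 1} := by
  obtain ⟨i, hi⟩ := Function.ne_iff.mp hv
  have support : ∀ j, j ≠ i → v j = 0 := by
    intro j hji
    by_contra hj
    obtain ⟨z, hzS, hz⟩ := hS hji
    exact hz (eq_of_smul_mem_span_singleton (hinv z hzS) hj hi)
  have v_eq : v = Pi.single i (v i) := Function.eq_update_iff.mpr ⟨rfl, support⟩
  exact ⟨i, by rw [v_eq, span_singleton_pi_single i hi]⟩

theorem torus_fixed_flags_general [Finite ι] [DecidableEq ι] {S : Set (ι → K)}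
    (hS : S.SeparatesPoints) {L : ι → Submodule D (ι → D)}
    (hline : ∀ ν, ∃ v : ι → D, v ≠ 0 ∧ L ν = Submodule.span D {v})
    (hL : Function.Injective L)
    (hinv : ∀ z ∈ S, ∀ ν, ∀ v ∈ L ν, (fun i => z i • v i) ∈ L ν) :
    ∃ w : Equiv.Perm ι, ∀ ν, L ν = Submodule.span D {Pi.single (w ν) 1} := by
  have coordinate_line : ∀ ν, ∃ i, L ν = Submodule.span D {Pi.single i 1} := by
    intro ν
    obtain ⟨v, hv, hLν⟩ := hline ν
    rw [hLν]
    refine exists_span_singleton_eq_span_single hS hv fun z hz => ?_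
    exact hLν ▸ hinv z hz ν v (hLν ▸ Submodule.mem_span_singleton_self v)
  choose w hw using coordinate_line
  have w_injective : Function.Injective w := fun μ ν h => hL (by rw [hw μ, hw ν, h])
  exact ⟨Equiv.ofBijective w (Finite.injective_iff_bijective.mp w_injective), hw⟩

end CoordinateLines

lemma separatesPoints_sq_eq_one (ι R : Type*) [Ring R] [NeZero (2 : R)] :
    {z : ι → R | z ^ 2 = 1}.SeparatesPoints := by
  classical
  intro i j hij
  refine ⟨Function.update 1 i (-1), ?_, ?_⟩
  · ext k
    obtain rfl | hk := eq_or_ne k i <;> simp [*]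
  · have one_add_one_ne_zero : (1 : R) + 1 ≠ 0 := one_add_one_eq_two (R := R) ▸ two_ne_zero
    simpa [hij.symm, neg_eq_iff_add_eq_zero] using one_add_one_ne_zero

lemma qForm_self_eq_zero {n : ℕ} {h : Fin n → Quaternion ℝ} : qForm n h h = 0 ↔ h = 0 := by
  have qForm_self : qForm n h h = ((∑ i, Quaternion.normSq (h i) : ℝ) : Quaternion ℝ) := by
    simp only [qForm, Quaternion.self_mul_star]
    exact (map_sum (algebraMap ℝ (Quaternion ℝ)) _ _).symm
  rw [qForm_self, ← Quaternion.coe_zero, Quaternion.coe_inj,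
    Fintype.sum_eq_zero_iff_of_nonneg fun _ => Quaternion.normSq_nonneg, funext_iff, funext_iff]
  exact forall_congr' fun _ => Quaternion.normSq_eq_zero

lemma injective_of_pairwise_qForm_eq_zero {κ : Type*} {n : ℕ}
    {L : κ → Submodule (Quaternion ℝ) (Fin n → Quaternion ℝ)} (hL : ∀ ν, L ν ≠ ⊥)
    (horth : Pairwise fun μ ν => ∀ h ∈ L μ, ∀ k ∈ L ν, qForm n h k = 0) :
    Function.Injective L := by
  intro μ ν hμν
  by_contra hne
  obtain ⟨v, hv, hv0⟩ := Submodule.exists_mem_ne_zero_of_ne_bot (hL μ)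
  exact hv0 (qForm_self_eq_zero.mp (horth hne v hv v (hμν ▸ hv)))

lemma sign_smul_mem_of_unit_complex_invariant {ι : Type*}
    {W : Submodule (Quaternion ℝ) (ι → Quaternion ℝ)}
    (hW : ∀ z : ι → Quaternion ℝ,
      (∀ i, ∃ a b : ℝ, a ^ 2 + b ^ 2 = 1 ∧ z i = ⟨a, b, 0, 0⟩) →
      ∀ v ∈ W, (fun i => v i * star (z i)) ∈ W)
    {s : ι → ℝ} (hs : s ^ 2 = 1) {v : ι → Quaternion ℝ} (hv : v ∈ W) :
    (fun i => s i • v i) ∈ W := by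
  have s_unit : ∀ i, ∃ a b : ℝ, a ^ 2 + b ^ 2 = 1 ∧ (s i : Quaternion ℝ) = ⟨a, b, 0, 0⟩ :=
    fun i => ⟨s i, 0, by simpa using congrFun hs i, rfl⟩
  simpa only [Quaternion.star_coe, Quaternion.mul_coe_eq_smul] using hW _ s_unit v hv

/-- A tuple of pairwise orthogonal nonzero `ℍ`-lines in `ℍⁿ`, each invariant under every
diagonal matrix with unit complex entries (acting by `h ↦ h ⬝ A*`), consists of
coordinate lines permuted by some `w ∈ S_n`. -/
theorem torus_fixed_flags (n : ℕ) (L : Fin n → Submodule (Quaternion ℝ) (Fin n → Quaternion ℝ))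
    (hline : ∀ ν, ∃ v : Fin n → Quaternion ℝ, v ≠ 0 ∧
      L ν = Submodule.span (Quaternion ℝ) {v})
    (horth : ∀ μ ν, μ ≠ ν → ∀ h ∈ L μ, ∀ k ∈ L ν, qForm n h k = 0)
    (hinv : ∀ z : Fin n → Quaternion ℝ,
      (∀ ν, ∃ a b : ℝ, a ^ 2 + b ^ 2 = 1 ∧ z ν = ⟨a, b, 0, 0⟩) →
      ∀ ν, ∀ v ∈ L ν, (fun i => v i * star (z i)) ∈ L ν) :
    ∃ w : Equiv.Perm (Fin n), ∀ ν,
      L ν = Submodule.span (Quaternion ℝ) {Pi.single (w ν) (1 : Quaternion ℝ)} := by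
  have ne_bot : ∀ ν, L ν ≠ ⊥ := fun ν => by
    obtain ⟨v, hv, hLν⟩ := hline ν
    rwa [hLν, Ne, Submodule.span_singleton_eq_bot]
  exact torus_fixed_flags_general (separatesPoints_sq_eq_one (Fin n) ℝ) hline
    (injective_of_pairwise_qForm_eq_zero ne_bot fun μ ν => horth μ ν)
    fun _ hz ν _ hv => sign_smul_mem_of_unit_complex_invariant (hinv · · ν) hz hv
end
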